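/- Let Γ be a connected finite simple graph with each vertex group a nontrivial primary cyclic group (of prime power order). Then the graph product W_Γ is freely indecomposable. -/

import Mathlib

universe u v w

/-- A group is freely indecomposable if it is nontrivial and not isomorphic to
a free product of two nontrivial groups. -/
def FreelyIndecomposable (G : Type*) [Group G] : Prop :=
  Nontrivial G ∧ ∀ (A : Type v) (B : Type w) [Group A] [Group B],
    Nontrivial A → Nontrivial B → IsEmpty (G ≃* Monoid.Coprod A B)

/-- The set of defining relators of a graph product. -/
def graphProductRels {V : Type*} (Γ : SimpleGraph V) (G : V → Type u)
    [∀ v, Group (G v)] : Subgroup (Monoid.CoprodI G) :=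
  Subgroup.normalClosure
    {x | ∃ (v w : V) (a : G v) (b : G w), Γ.Adj v w ∧
      x = Monoid.CoprodI.of a * Monoid.CoprodI.of b *
        (Monoid.CoprodI.of a)⁻¹ * (Monoid.CoprodI.of b)⁻¹}

instance {V : Type*} (Γ : SimpleGraph V) (G : V → Type u) [∀ v, Group (G v)] :
    (graphProductRels Γ G).Normal :=
  Subgroup.normalClosure_normal

/-- The graph product of the groups `G v` over the graph `Γ`. -/
def GraphProduct {V : Type*} (Γ : SimpleGraph V) (G : V → Type u)
    [∀ v, Group (G v)] :=
  Monoid.CoprodI G ⧸ graphProductRels Γ G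

instance {V : Type*} (Γ : SimpleGraph V) (G : V → Type u) [∀ v, Group (G v)] :
    Group (GraphProduct Γ G) :=
  inferInstanceAs (Group (Monoid.CoprodI G ⧸ graphProductRels Γ G))

namespace GPaux

open Monoid

theorem isChain_of_split {α : Type*} {R : α → α → Prop} : ∀ (l : List α),
    (∀ s p q t, l = s ++ p :: q :: t → R p q) → l.IsChain R
  | [], _ => by simp
  | [a], _ => by simp
  | a :: b :: t, h => by
    rw [List.isChain_cons_cons]
    refine ⟨h [] a b t rfl, isChain_of_split (b :: t) ?_⟩
    intro s p q t' hs
    exact h (a :: s) p q t' (by rw [hs]; rfl)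

theorem isChain_rep {α : Type*} {R : α → α → Prop} {l : List α} (h : l.IsChain R)
    (hc : ∀ x ∈ l.getLast?, ∀ y ∈ l.head?, R x y) (n : ℕ) :
    ((List.replicate n l).flatten.IsChain R) ∧
      (∀ y ∈ (List.replicate n l).flatten.head?, y ∈ l.head?) := by
  induction n with
  | zero => simp
  | succ n ih =>
    rw [List.replicate_succ, List.flatten_cons]
    refine ⟨List.isChain_append.2 ⟨h, ih.1, fun x hx y hy => hc x hx y (ih.2 y hy)⟩, ?_⟩
    intro y hy
    cases l with
    | nil => simp at hy
    | cons a t => simpa using hy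

section
variable {ι : Type*} {M : ι → Type*} [∀ i, Group (M i)]

def ev (l : List (Σ i, M i)) : CoprodI M := (l.map (fun p => CoprodI.of p.2)).prod

theorem ev_append (l m : List (Σ i, M i)) : ev (l ++ m) = ev l * ev m := by simp [ev]
theorem ev_cons (p : Σ i, M i) (m : List (Σ i, M i)) : ev (p :: m) = CoprodI.of p.2 * ev m := by
  simp [ev]
theorem ev_rep (l : List (Σ i, M i)) (n : ℕ) : ev (List.replicate n l).flatten = ev l ^ n := by
  induction n with
  | zero => simp [ev]
  | succ n ih => rw [List.replicate_succ, List.flatten_cons, ev_append, ih, pow_succ']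

theorem ev_surj (x : CoprodI M) : ∃ l : List (Σ i, M i), ev l = x := by
  classical
  exact ⟨(CoprodI.Word.equiv x).toList, CoprodI.Word.equiv.symm_apply_apply x⟩

theorem ev_ne_one (l : List (Σ i, M i)) (h1 : ∀ p ∈ l, 1 ≠ p.2)
    (h2 : l.IsChain (fun p q => p.1 ≠ q.1)) (hl : ev l = 1) : l = [] := by
  classical
  let w : CoprodI.Word M := ⟨l, fun p hp => (h1 p hp).symm, h2⟩
  have : w.prod = (CoprodI.Word.empty : CoprodI.Word M).prod := by
    rw [CoprodI.Word.prod_empty]; exact hl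
  have h : w = CoprodI.Word.empty := CoprodI.Word.equiv.symm.injective this
  exact congrArg CoprodI.Word.toList h

theorem conj_letter (x : CoprodI M) (n : ℕ) (hn : n ≠ 0) (hx : x ^ n = 1) :
    x = 1 ∨ ∃ (i : ι) (m : M i) (c : CoprodI M), x = c * CoprodI.of m * c⁻¹ := by
  classical
  let P : ℕ → Prop := fun k => ∃ l : List (Σ i, M i), l.length = k ∧ ∃ c, x = c * ev l * c⁻¹
  have hP : ∃ k, P k := by
    obtain ⟨l, hl⟩ := ev_surj x
    exact ⟨_, l, rfl, 1, by simp [hl]⟩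
  obtain ⟨l, hlk, c, hc⟩ := Nat.find_spec hP
  have hmin : ∀ l' : List (Σ i, M i), ∀ c', x = c' * ev l' * c'⁻¹ → l.length ≤ l'.length := by
    intro l' c' h
    rw [hlk]
    exact Nat.find_min' hP ⟨l', rfl, c', h⟩
  match l, hc, hmin with
  | [], hc, _ => left; simpa [ev] using hc
  | [p], hc, _ => right; exact ⟨p.1, p.2, c, by simpa [ev] using hc⟩
  | p :: q :: t, hc, hmin =>
    exfalso
    set l := p :: q :: t with hldef
    have hne : ∀ r ∈ l, 1 ≠ r.2 := by
      intro r hr h1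
      obtain ⟨s, t', hst⟩ := List.append_of_mem hr
      have := hmin (s ++ t') c (by
        rw [hc, hst, ev_append, ev_cons, ev_append, ← h1]; simp)
      rw [hst] at this
      simp at this
    have hch : l.IsChain (fun p q => p.1 ≠ q.1) := by
      apply isChain_of_split
      rintro s ⟨i, a⟩ ⟨j, b⟩ t' hst hij
      obtain rfl : i = j := hij
      have := hmin (s ++ ⟨i, a * b⟩ :: t') c (by
        rw [hc, hst, ev_append, ev_cons, ev_cons, ev_append, ev_cons, map_mul]; simp [mul_assoc])
      rw [hst] at this
      simp at this
    have hcy : ∀ x ∈ l.getLast?, ∀ y ∈ l.head?, x.1 ≠ y.1 := by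
      intro z hz y hy
      have hy' : p = y := by simpa [hldef] using hy
      subst hy'
      obtain ⟨s, hs⟩ : ∃ s, q :: t = s ++ [z] := by
        have : z ∈ (q :: t).getLast? := by simpa [hldef, List.getLast?_cons_cons] using hz
        obtain ⟨s, hs⟩ := List.mem_getLast?_eq_getLast this
        exact ⟨(q :: t).dropLast, by rw [hs]; exact (List.dropLast_append_getLast _).symm⟩
      obtain ⟨i, a⟩ := p
      obtain ⟨j, b⟩ := z
      intro hij
      obtain rfl : j = i := hij
      have := hmin (s ++ [⟨j, b * a⟩]) (c * CoprodI.of a) (by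
        rw [hc, hldef, hs, ev_cons, ev_append, ev_append, ev_cons, ev_cons, map_mul]
        simp [mul_assoc, ev])
      rw [hldef, hs] at this
      simp at this
    have hpow : ev l ^ n = 1 := by
      rw [hc, conj_pow] at hx
      simpa using hx
    have := ev_ne_one (List.replicate n l).flatten (by
      intro r hr
      obtain ⟨l', hl', hr'⟩ := List.mem_flatten.1 hr
      rw [(List.mem_replicate.1 hl').2] at hr'
      exact hne r hr') (isChain_rep hch hcy n).1 (by rw [ev_rep, hpow])
    obtain ⟨k, rfl⟩ := Nat.exists_eq_succ_of_ne_zero hn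
    rw [List.replicate_succ, List.flatten_cons, hldef] at this
    simp at this
end

section
variable {A : Type v} {B : Type w} [Group A] [Group B]

def Fam (A : Type v) (B : Type w) : Bool → Type (max v w)
  | true => ULift.{w} A
  | false => ULift.{v} B

instance (b : Bool) : Group (Fam A B b) :=
  match b with
  | true => inferInstanceAs (Group (ULift.{w} A))
  | false => inferInstanceAs (Group (ULift.{v} B))

def toF : Coprod A B →* CoprodI (Fam A B) :=
  Coprod.lift
    ((CoprodI.of (M := Fam A B) (i := true)).comp (MulEquiv.ulift.{v, w} (α := A)).symm.toMonoidHom)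
    ((CoprodI.of (M := Fam A B) (i := false)).comp (MulEquiv.ulift.{w, v} (α := B)).symm.toMonoidHom)

def famHom : (b : Bool) → Fam A B b →* Coprod A B
  | true => (Coprod.inl).comp (MulEquiv.ulift.{v, w} (α := A)).toMonoidHom
  | false => (Coprod.inr).comp (MulEquiv.ulift.{w, v} (α := B)).toMonoidHom

def ofF : CoprodI (Fam A B) →* Coprod A B := CoprodI.lift famHom

theorem ofF_toF (x : Coprod A B) : ofF (toF x) = x := by
  have : (ofF (A := A) (B := B)).comp toF = MonoidHom.id _ := by
    apply Coprod.hom_ext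
    · ext a
      exact CoprodI.lift_of famHom (i := true) (ULift.up a)
    · ext a
      exact CoprodI.lift_of famHom (i := false) (ULift.up a)
  exact DFunLike.congr_fun this x

theorem torsion_letter (x : Coprod A B) (hx : IsOfFinOrder x) :
    (∃ a c, x = c * Coprod.inl a * c⁻¹) ∨ (∃ b c, x = c * Coprod.inr b * c⁻¹) := by
  obtain ⟨n, hn, hxn⟩ := isOfFinOrder_iff_pow_eq_one.1 hx
  rcases conj_letter (toF x) n hn.ne' (by rw [← map_pow, hxn, map_one]) with h | ⟨i, m, c, h⟩
  · left
    refine ⟨1, 1, ?_⟩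
    rw [← ofF_toF x, h]; simp
  · have h' : x = ofF c * famHom i m * (ofF c)⁻¹ := by
      rw [← ofF_toF x, h]; simp [ofF]
    cases i
    · right; exact ⟨_, _, h'⟩
    · left; exact ⟨_, _, h'⟩

theorem tors1 (x : Coprod A B) (hx : IsOfFinOrder x) :
    Coprod.fst x = 1 ∨ Coprod.snd x = 1 := by
  rcases torsion_letter x hx with ⟨a, c, rfl⟩ | ⟨a, c, rfl⟩
  · right; simp
  · left; simp

theorem tors2 (x : Coprod A B) (hx : IsOfFinOrder x) (h1 : Coprod.fst x = 1)
    (h2 : Coprod.snd x = 1) : x = 1 := by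
  rcases torsion_letter x hx with ⟨a, c, rfl⟩ | ⟨a, c, rfl⟩
  · have : a = 1 := by simpa using h1
    simp [this]
  · have : a = 1 := by simpa using h2
    simp [this]

theorem tors3 {x y : Coprod A B} (hx : IsOfFinOrder x) (hy : IsOfFinOrder y) (hc : Commute x y)
    (hx1 : x ≠ 1) (h : Coprod.snd x = 1) : Coprod.snd y = 1 := by
  by_contra hne
  have h3 := (tors1 y hy).resolve_right hne
  rcases tors1 (x * y) (hc.isOfFinOrder_mul hx hy) with h4 | h4
  · rw [map_mul, h3, mul_one] at h4
    exact hx1 (tors2 x hx h4 h)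
  · rw [map_mul, h, one_mul] at h4
    exact hne h4
end

section
variable {V : Type*} (Γ : SimpleGraph V) (G : V → Type u) [∀ v, Group (G v)]

def gmk : CoprodI G →* GraphProduct Γ G := QuotientGroup.mk' (graphProductRels Γ G)

theorem gmk_surj : Function.Surjective (gmk Γ G) := QuotientGroup.mk'_surjective _

def vof (v : V) : G v →* GraphProduct Γ G := (gmk Γ G).comp CoprodI.of

theorem vof_comm {v w : V} (h : Γ.Adj v w) (a : G v) (b : G w) :
    Commute (vof Γ G v a) (vof Γ G w b) := by
  have : gmk Γ G (CoprodI.of a * CoprodI.of b * (CoprodI.of a)⁻¹ * (CoprodI.of b)⁻¹) = 1 :=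
    (QuotientGroup.eq_one_iff _).2 (Subgroup.subset_normalClosure ⟨v, w, a, b, h, rfl⟩)
  rw [map_mul, map_mul, map_mul, map_inv, map_inv] at this
  rw [mul_inv_eq_one, mul_inv_eq_iff_eq_mul] at this
  exact this

theorem vof_inj (v : V) : Function.Injective (vof Γ G v) := by
  classical
  let f : CoprodI G →* (∀ v, G v) := CoprodI.lift (fun v => MonoidHom.mulSingle G v)
  have hf : graphProductRels Γ G ≤ f.ker := by
    apply Subgroup.normalClosure_le_normal
    rintro _ ⟨v, w, a, b, h, rfl⟩
    have := (Pi.mulSingle_commute (f := G) h.ne a b).eq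
    simp only [SetLike.mem_coe, MonoidHom.mem_ker, map_mul, map_inv, f, CoprodI.lift_of,
      MonoidHom.mulSingle_apply]
    rw [mul_inv_eq_one, mul_inv_eq_iff_eq_mul]
    exact this
  let g : GraphProduct Γ G →* (∀ v, G v) := QuotientGroup.lift (graphProductRels Γ G) f hf
  have hg : ∀ a, g (vof Γ G v a) = Pi.mulSingle v a := by
    intro a
    change f (CoprodI.of a) = _
    simp [f]
  intro a b hab
  have := congrArg g hab
  rw [hg, hg] at this
  exact Pi.mulSingle_injective _ this

theorem hom_triv {H : Type*} [Group H] (f : GraphProduct Γ G →* H)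
    (h : ∀ v a, f (vof Γ G v a) = 1) (x) : f x = 1 := by
  have : f.comp (gmk Γ G) = 1 := by
    apply CoprodI.ext_hom
    intro v
    ext a
    exact h v a
  obtain ⟨y, rfl⟩ := gmk_surj Γ G x
  exact DFunLike.congr_fun this y
end

theorem prim_gen {H : Type*} [Group H]
    (h : ∃ p k : ℕ, p.Prime ∧ 1 ≤ k ∧ Nonempty (H ≃* Multiplicative (ZMod (p ^ k)))) :
    ∃ z : H, z ≠ 1 ∧ IsOfFinOrder z ∧ ∀ a, a ∈ Subgroup.zpowers z := by
  obtain ⟨p, k, hp, hk, ⟨e⟩⟩ := h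
  have : NeZero (p ^ k) := ⟨pow_ne_zero _ hp.ne_zero⟩
  have : Fact (1 < p ^ k) := ⟨Nat.one_lt_pow (by omega) hp.one_lt⟩
  have : Finite H := Finite.of_equiv _ e.symm.toEquiv
  have : Nontrivial H := e.toEquiv.nontrivial
  have : IsCyclic H := isCyclic_of_surjective e.symm e.symm.surjective
  obtain ⟨z, hz⟩ := IsCyclic.exists_generator (α := H)
  refine ⟨z, ?_, isOfFinOrder_of_finite z, hz⟩
  rintro rfl
  obtain ⟨a, ha⟩ := exists_ne (1 : H)
  exact ha (by simpa using hz a)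

theorem hom_gen {H K : Type*} [Group H] [Group K] (f : H →* K) (z : H)
    (hz : ∀ a, a ∈ Subgroup.zpowers z) (h : f z = 1) (a : H) : f a = 1 := by
  obtain ⟨n, rfl⟩ := hz a
  simp [h]

end GPaux

/-- A graph product over a connected finite graph of nontrivial primary cyclic
groups (of prime power order) is freely indecomposable. -/
theorem graph_product_connected_primary_freely_indecomposable {V : Type*}
    [Fintype V] (Γ : SimpleGraph V) (hconn : Γ.Connected)
    (G : V → Type u) [∀ v, Group (G v)]
    (hprim : ∀ v : V, ∃ p k : ℕ, p.Prime ∧ 1 ≤ k ∧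
      Nonempty (G v ≃* Multiplicative (ZMod (p ^ k)))) :
    FreelyIndecomposable (GraphProduct Γ G) := by
  obtain ⟨v₀⟩ := hconn.nonempty
  choose z hz1 hzf hzg using fun v => GPaux.prim_gen (hprim v)
  refine ⟨⟨GPaux.vof Γ G v₀ (z v₀), 1, fun h => hz1 v₀ ?_⟩, ?_⟩
  · exact GPaux.vof_inj Γ G v₀ (by rw [h, map_one])
  intro A B _ _ hA hB
  refine ⟨fun e => ?_⟩
  let y : V → Monoid.Coprod A B := fun v => e (GPaux.vof Γ G v (z v))
  have hy1 : ∀ v, y v ≠ 1 := by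
    intro v h
    have h2 : GPaux.vof Γ G v (z v) = 1 := e.injective (by rw [map_one]; exact h)
    exact hz1 v (GPaux.vof_inj Γ G v (by rw [h2, map_one]))
  have hyf : ∀ v, IsOfFinOrder (y v) := fun v =>
    (e.toMonoidHom.comp (GPaux.vof Γ G v)).isOfFinOrder (hzf v)
  have hstep : ∀ v w, Γ.Adj v w → Monoid.Coprod.snd (y v) = 1 → Monoid.Coprod.snd (y w) = 1 := by
    intro v w h hs
    exact GPaux.tors3 (hyf v) (hyf w) ((GPaux.vof_comm Γ G h (z v) (z w)).map e.toMonoidHom)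
      (hy1 v) hs
  have hall : ∀ v w, Monoid.Coprod.snd (y v) = 1 → Monoid.Coprod.snd (y w) = 1 := by
    intro v w
    obtain ⟨p⟩ := hconn.preconnected v w
    induction p with
    | nil => exact id
    | cons h p ih => exact fun hs => ih (hstep _ _ h hs)
  by_cases h0 : Monoid.Coprod.snd (y v₀) = 1
  · obtain ⟨b, hb⟩ := exists_ne (1 : B)
    have := GPaux.hom_triv Γ G (Monoid.Coprod.snd.comp e.toMonoidHom)
      (fun v a => GPaux.hom_gen ((Monoid.Coprod.snd.comp e.toMonoidHom).comp (GPaux.vof Γ G v))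
        (z v) (hzg v) (hall v₀ v h0) a) (e.symm (Monoid.Coprod.inr b))
    exact hb (by simpa using this)
  · have hf : ∀ v, Monoid.Coprod.fst (y v) = 1 := fun v =>
      (GPaux.tors1 (y v) (hyf v)).resolve_right fun h => h0 (hall v v₀ h)
    obtain ⟨b, hb⟩ := exists_ne (1 : A)
    have := GPaux.hom_triv Γ G (Monoid.Coprod.fst.comp e.toMonoidHom)
      (fun v a => GPaux.hom_gen ((Monoid.Coprod.fst.comp e.toMonoidHom).comp (GPaux.vof Γ G v))
        (z v) (hzg v) (hf v) a) (e.symm (Monoid.Coprod.inl b))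
    exact hb (by simpa using this)
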